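/- Let A>0 and B∈ℝ with A+B<0. For n≥n₀ let x_n∈(0,1) be the unique zero of ζ_n, set Ω_n=B/2+A/(4x_n), and set Ω̂_m=A/4+B/2−A(m+1)/(2m(m+2))−B/(2m) for integers m≥1. If n₀ is large enough (depending only on A and B), then Ω_n≠Ω̂_{n·p} for all n≥n₀ and all integers p≥1. Moreover, the equation κ=2∫₀^∞ e^{−κτ}(1+τ)^{−2}dτ has a unique solution κ_c∈(0,2), and whenever κ:=−2(A+B)/A>κ_c there exists n₀∈ℕ such that Ω_n≠Ω̂_m for all n,m≥n₀. -/

import Mathlib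

open MeasureTheory Real Set

/-- Rising factorial (Pochhammer symbol) `(a)_k`. -/
noncomputable def poch (a : ℝ) (k : ℕ) : ℝ := (ascPochhammer ℝ k).eval a

/-- Gauss hypergeometric function `F(a,b;c;x)`: given by Euler's integral representation
when `c > b > 0` (valid for all `x ∈ (-∞,1]`), and by the defining power series otherwise. -/
noncomputable def hyper (a b c x : ℝ) : ℝ :=
  if b < c ∧ 0 < b then
    Real.Gamma c / (Real.Gamma b * Real.Gamma (c - b)) *
      ∫ t in (0:ℝ)..1, t ^ (b - 1) * (1 - t) ^ (c - b - 1) * (1 - x * t) ^ (-a)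
  else
    ∑' k : ℕ, poch a k * poch b k / (poch c k * (Nat.factorial k)) * x ^ k

/-- The coefficient `a_t = (t - √(t²+8))/2`. -/
noncomputable def aCoef (t : ℝ) : ℝ := (t - Real.sqrt (t ^ 2 + 8)) / 2

/-- The coefficient `b_t = (t + √(t²+8))/2`. -/
noncomputable def bCoef (t : ℝ) : ℝ := (t + Real.sqrt (t ^ 2 + 8)) / 2

/-- `F_t(x) = F(a_t, b_t; t+1; x)`. -/
noncomputable def Fhyp (t x : ℝ) : ℝ := hyper (aCoef t) (bCoef t) (t + 1) x

/-- The dispersion function `ζ_n` associated with the quadratic profile `f₀(r) = Ar² + B`. -/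
noncomputable def zetaDisp (A B : ℝ) (n : ℕ) (x : ℝ) : ℝ :=
  Fhyp n x * (1 - x + (A + 2 * B) / (A * ((n : ℝ) + 1)) * x)
    + ∫ τ in (0:ℝ)..1, Fhyp n (τ * x) * τ ^ n * (-1 + 2 * x * τ)

/-- `κ = -2(A+B)/A`. -/
noncomputable def kap (A B : ℝ) : ℝ := -2 * (A + B) / A

/-- `c_κ = κ² - 2 + 2∫₀^∞ e^{-κτ}(1+τ)^{-2} dτ`. -/
noncomputable def ckap (A B : ℝ) : ℝ :=
  kap A B ^ 2 - 2 + 2 * ∫ τ in Set.Ioi (0:ℝ), Real.exp (-kap A B * τ) / (1 + τ) ^ 2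

/-- The element `Ω̂_m = A/4 + B/2 - A(m+1)/(2m(m+2)) - B/(2m)` of the singular set. -/
noncomputable def OmHat (A B : ℝ) (m : ℕ) : ℝ :=
  A / 4 + B / 2 - A * ((m : ℝ) + 1) / (2 * m * ((m : ℝ) + 2)) - B / (2 * m)

/-!
Put `φ_m = 1 + κ / m + 2 / (m (m + 2))`, which decreases in `m`. The equation
`B / 2 + A / (4 x) = Ω̂_m` says `x φ_m = 1`, while
`ζ_n(x) = F_n(x) (n / (n + 1) (1 - x φ_n) + R_n(x))` with a small remainder `R_n`; so it is enough
to locate `1 / x` strictly between two values of `φ` when `x` is a zero of `ζ_n`.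

Up to a positive factor, `F_n(x)` is `∫₀¹ t ^ (b - 1) (1 - t) ^ (-ε) (1 - x t) ^ ε dt` with
`b = b_n ≥ n` and `b ε = 2`. It is concave in `x`, whence `R_n(x) > 0` for `x` near `1`; this gives
`x φ_n > 1` and excludes `m ≤ n`. The bound `R_n = o(1 / n)` gives `x → 1` and `x φ_{2n} < 1`, which
excludes `m ≥ 2 n`. To exclude every `m > n`, expand the first-order part of `F_n` in `ε` as a power
series in `x ≤ 1 - k / n`: it is a Riemann sum of `I(k) = ∫₀^∞ e^{-kτ} (1 + τ)⁻² dτ`, so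
`R_n(x) ≤ (2 I(k) + o(1)) / n²`. For `κ > k = 2 I(k)` this is less than the gap
`φ_n - φ_{n+1} ≥ κ / (n (n + 1))`.
-/

open Filter Topology

/-! ### Integrals over `[0, 1]` -/

lemma integral_pow_mul_one_sub_pow (n k : ℕ) :
    ∫ τ in (0 : ℝ)..1, τ ^ n * (1 - τ ^ k) = k / ((n + 1) * (n + k + 1)) := by
  simp only [mul_sub, mul_one, ← pow_add]
  rw [intervalIntegral.integral_sub (Continuous.intervalIntegrable (by fun_prop) _ _)
    (Continuous.intervalIntegrable (by fun_prop) _ _), integral_pow, integral_pow]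
  have : (n : ℝ) + 1 ≠ 0 := by positivity
  have : (n : ℝ) + k + 1 ≠ 0 := by positivity
  push_cast
  simp only [one_pow, ne_eq, Nat.add_eq_zero_iff, one_ne_zero, and_false, not_false_eq_true,
    zero_pow, sub_zero]
  field_simp
  ring

lemma integral_rpow_sub_one {b : ℝ} (hb : 0 < b) : ∫ t in (0 : ℝ)..1, t ^ (b - 1) = 1 / b := by
  rw [integral_rpow (Or.inl (by linarith)), sub_add_cancel, one_rpow, zero_rpow hb.ne', sub_zero]

lemma intervalIntegrable_rpow_sub_one {b : ℝ} (hb : 0 < b) :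
    IntervalIntegrable (fun t : ℝ => t ^ (b - 1)) volume 0 1 :=
  intervalIntegral.intervalIntegrable_rpow' (by linarith)

lemma intervalIntegrable_rpow_mul_one_sub_rpow_neg {b ε : ℝ} (hb : 0 < b) (hε : ε < 1) :
    IntervalIntegrable (fun t : ℝ => t ^ (b - 1) * (1 - t) ^ (-ε)) volume 0 1 := by
  have hbeta := (Complex.betaIntegral_convergent (u := (b : ℂ)) (v := ((1 - ε : ℝ) : ℂ))
    (by simpa using hb) (by simpa using hε)).norm
  refine hbeta.congr_uIoo fun t ht => ?_
  rw [uIoo_of_le zero_le_one] at ht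
  have hone : (1 : ℂ) - t = ((1 - t : ℝ) : ℂ) := by push_cast; rfl
  simp only [norm_mul]
  rw [hone, Complex.norm_cpow_eq_rpow_re_of_pos ht.1,
    Complex.norm_cpow_eq_rpow_re_of_pos (sub_pos.2 ht.2)]
  simp

lemma hasSum_integral_mul_of_abs_le {a b : ℝ} {w f : ℝ → ℝ} {g : ℕ → ℝ → ℝ} {u : ℕ → ℝ}
    (hw : IntervalIntegrable w volume a b) (hg : ∀ j, Continuous (g j)) (hu : Summable u)
    (hgu : ∀ j, ∀ t ∈ uIoc a b, |g j t| ≤ u j)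
    (hf : ∀ t ∈ uIoc a b, HasSum (fun j => g j t) (f t)) :
    HasSum (fun j => ∫ t in a..b, w t * g j t) (∫ t in a..b, w t * f t) := by
  refine intervalIntegral.hasSum_integral_of_dominated_convergence (fun j t => |w t| * u j)
    (fun j => hw.def'.aestronglyMeasurable.mul (hg j).aestronglyMeasurable) ?_ ?_ ?_ ?_
  · refine fun j => Eventually.of_forall fun t ht => ?_
    rw [norm_mul, norm_eq_abs, norm_eq_abs]
    exact mul_le_mul_of_nonneg_left (hgu j t ht) (abs_nonneg _)
  · exact Eventually.of_forall fun t _ => hu.mul_left _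
  · simpa only [tsum_mul_left] using hw.abs.mul_const _
  · exact Eventually.of_forall fun t ht => (hf t ht).mul_left _

lemma integral_pow_mul_one_sub_mul_affine (n : ℕ) (x : ℝ) :
    ∫ τ in (0 : ℝ)..1, τ ^ n * (1 - τ) * (-1 + 2 * x * τ) =
      (2 * x * (n + 1) - (n + 3)) / ((n + 1) * (n + 2) * (n + 3)) := by
  have hsplit : ∀ τ : ℝ, τ ^ n * (1 - τ) * (-1 + 2 * x * τ) =
      2 * x * (τ ^ (n + 1) * (1 - τ ^ 1)) - τ ^ n * (1 - τ ^ 1) := fun τ => by ring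
  simp only [hsplit]
  rw [intervalIntegral.integral_sub (Continuous.intervalIntegrable (by fun_prop) _ _)
    (Continuous.intervalIntegrable (by fun_prop) _ _), intervalIntegral.integral_const_mul,
    integral_pow_mul_one_sub_pow, integral_pow_mul_one_sub_pow]
  push_cast
  field_simp
  ring

lemma chord_mul_sub_le_of_concaveOn {h : ℝ → ℝ} {s τ : ℝ} (hconc : ConcaveOn ℝ (Icc 0 1) h)
    (h1 : h 1 = 0) (hs : s ∈ Ioo (0 : ℝ) 1) (hτ : τ ∈ Ioo (0 : ℝ) 1) :
    h s / (1 - s) * (1 - τ) * (τ - s) ≤ h τ * (τ - s) := by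
  have hs1 : 0 < 1 - s := sub_pos.2 hs.2
  have hone : (1 : ℝ) ∈ Icc (0 : ℝ) 1 := right_mem_Icc.2 zero_le_one
  rcases lt_trichotomy τ s with hτs | rfl | hsτ
  · have hslope := hconc.slope_anti_adjacent (Ioo_subset_Icc_self hτ) hone hτs hs.2
    rw [h1, zero_sub, neg_div, le_div_iff₀ (sub_pos.2 hτs)] at hslope
    have hcs : h s / (1 - s) * (1 - s) = h s := div_mul_cancel₀ _ hs1.ne'
    exact mul_le_mul_of_nonpos_right (by linarith) (sub_nonpos.2 hτs.le)
  · rw [sub_self, mul_zero, mul_zero]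
  · have hslope := hconc.slope_anti_adjacent (Ioo_subset_Icc_self hs) hone hsτ hτ.2
    rw [h1, div_le_div_iff₀ (sub_pos.2 hτ.2) (sub_pos.2 hsτ)] at hslope
    refine mul_le_mul_of_nonneg_right ?_ (sub_nonneg.2 hsτ.le)
    rw [div_mul_eq_mul_div, div_le_iff₀ hs1]
    linarith

/-- A concave `h` vanishing at `1` lies below its chord from the sign change `s` of the weight
to `1` on `[0, s]` and above it on `[s, 1]`, so replacing `h` by the chord lowers the integral. -/
lemma integral_pos_of_concaveOn {h : ℝ → ℝ} {x : ℝ} {n : ℕ} (hconc : ConcaveOn ℝ (Icc 0 1) h)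
    (hint : IntervalIntegrable h volume 0 1) (h0 : 0 < h 0) (h1 : h 1 = 0)
    (hx : n + 3 < 2 * x * (n + 1)) :
    0 < ∫ τ in (0 : ℝ)..1, h τ * τ ^ n * (-1 + 2 * x * τ) := by
  have hx2 : 1 < 2 * x := by nlinarith [n.cast_nonneg (α := ℝ)]
  set s := (2 * x)⁻¹
  have hs : s ∈ Ioo (0 : ℝ) 1 := ⟨by positivity, inv_lt_one_of_one_lt₀ hx2⟩
  have hxs : 2 * x * s = 1 := mul_inv_cancel₀ (by positivity)
  have hhs : 0 < h s := by
    have hchord := hconc.2 (left_mem_Icc.2 zero_le_one) (right_mem_Icc.2 zero_le_one)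
      (sub_pos.2 hs.2).le hs.1.le (sub_add_cancel 1 s)
    simp only [smul_eq_mul, h1, mul_zero, add_zero, mul_one, zero_add] at hchord
    exact (mul_pos (sub_pos.2 hs.2) h0).trans_le hchord
  have hc : 0 < h s / (1 - s) := div_pos hhs (sub_pos.2 hs.2)
  calc 0 < h s / (1 - s) * ∫ τ in (0 : ℝ)..1, τ ^ n * (1 - τ) * (-1 + 2 * x * τ) := by
        rw [integral_pow_mul_one_sub_mul_affine]
        exact mul_pos hc (div_pos (sub_pos.2 hx) (by positivity))
    _ = ∫ τ in (0 : ℝ)..1, h s / (1 - s) * (τ ^ n * (1 - τ) * (-1 + 2 * x * τ)) :=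
        (intervalIntegral.integral_const_mul _ _).symm
    _ ≤ ∫ τ in (0 : ℝ)..1, h τ * τ ^ n * (-1 + 2 * x * τ) := by
        refine intervalIntegral.integral_mono_on_of_le_Ioo zero_le_one
          (Continuous.intervalIntegrable (by fun_prop) _ _)
          ((hint.mul_continuousOn (by fun_prop)).mul_continuousOn (by fun_prop)) fun τ hτ => ?_
        have hweight : -1 + 2 * x * τ = 2 * x * (τ - s) := by rw [mul_sub, hxs]; ring
        have hle := mul_le_mul_of_nonneg_left (chord_mul_sub_le_of_concaveOn hconc h1 hs hτ)
          (mul_nonneg (by linarith : 0 ≤ 2 * x) (pow_nonneg hτ.1.le n))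
        rw [hweight]
        linarith

/-! ### The moments `∫ t ^ (b - 1) (1 - t) ^ (-1/2)` -/

/-- The Beta integral `B(b, 1/2)`, which dominates the error terms. -/
noncomputable def halfBeta (b : ℝ) : ℝ := ∫ t in (0 : ℝ)..1, t ^ (b - 1) * (1 - t) ^ (-(1 / 2) : ℝ)

lemma halfBeta_nonneg (b : ℝ) : 0 ≤ halfBeta b :=
  intervalIntegral.integral_nonneg zero_le_one fun _ ht =>
    mul_nonneg (rpow_nonneg ht.1 _) (rpow_nonneg (sub_nonneg.2 ht.2) _)

lemma tendsto_halfBeta_atTop : Tendsto halfBeta atTop (𝓝 0) := by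
  have hlim : Tendsto halfBeta atTop (𝓝 (∫ _ in (0 : ℝ)..1, (0 : ℝ))) := by
    refine intervalIntegral.tendsto_integral_filter_of_dominated_convergence
      (fun t => t ^ ((1 : ℝ) - 1) * (1 - t) ^ (-(1 / 2) : ℝ))
      (Eventually.of_forall fun b => Measurable.aestronglyMeasurable (by fun_prop)) ?_
      (intervalIntegrable_rpow_mul_one_sub_rpow_neg one_pos (by norm_num)) ?_
    · filter_upwards [eventually_ge_atTop 1] with b hb
      refine Eventually.of_forall fun t ht => ?_
      rw [uIoc_of_le zero_le_one] at ht
      have hw : 0 ≤ (1 - t) ^ (-(1 / 2) : ℝ) := rpow_nonneg (sub_nonneg.2 ht.2) _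
      rw [norm_of_nonneg (mul_nonneg (rpow_nonneg ht.1.le _) hw)]
      exact mul_le_mul_of_nonneg_right
        (rpow_le_rpow_of_exponent_ge ht.1 ht.2 (by linarith)) hw
    · filter_upwards [Measure.ae_ne volume 1] with t ht1 ht
      rw [uIoc_of_le zero_le_one] at ht
      have hpow := (tendsto_rpow_atTop_of_base_lt_one t (by linarith [ht.1])
        (lt_of_le_of_ne ht.2 ht1)).comp (tendsto_atTop_add_const_right atTop (-1) tendsto_id)
      simpa [sub_eq_add_neg, Function.comp_def] using hpow.mul_const ((1 - t) ^ (-(1 / 2) : ℝ))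
  simpa using hlim

/-! ### The Euler integral -/

/-- The Euler integral of `F(-ε, b; b + 1 - ε; x)`, without its Gamma factor. -/
noncomputable def eulerIntegral (b ε x : ℝ) : ℝ :=
  ∫ t in (0 : ℝ)..1, t ^ (b - 1) * (1 - t) ^ (-ε) * (1 - x * t) ^ ε

lemma one_sub_mul_pos {x t : ℝ} (hx : x ≤ 1) (ht : t ∈ Ioo (0 : ℝ) 1) : 0 < 1 - x * t := by
  nlinarith [ht.1, ht.2]

lemma rpow_mul_one_sub_rpow_pos (b ε : ℝ) {t : ℝ} (ht : t ∈ Ioo (0 : ℝ) 1) :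
    0 < t ^ (b - 1) * (1 - t) ^ (-ε) :=
  mul_pos (rpow_pos_of_pos ht.1 _) (rpow_pos_of_pos (sub_pos.2 ht.2) _)

section Euler

variable {b ε : ℝ}

lemma intervalIntegrable_eulerIntegrand {x : ℝ} (hb : 0 < b) (hε : ε ∈ Ioo (0 : ℝ) 1) :
    IntervalIntegrable (fun t : ℝ => t ^ (b - 1) * (1 - t) ^ (-ε) * (1 - x * t) ^ ε)
      volume 0 1 :=
  (intervalIntegrable_rpow_mul_one_sub_rpow_neg hb hε.2).mul_continuousOn
    (Continuous.rpow_const (by fun_prop) fun _ => Or.inr hε.1.le).continuousOn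

lemma strictAntiOn_eulerIntegral (hb : 0 < b) (hε : ε ∈ Ioo (0 : ℝ) 1) :
    StrictAntiOn (eulerIntegral b ε) (Icc 0 1) := by
  intro x _ y hy hxy
  have hix := intervalIntegrable_eulerIntegrand (x := x) hb hε
  have hiy := intervalIntegrable_eulerIntegrand (x := y) hb hε
  rw [← sub_pos, eulerIntegral, eulerIntegral, ← intervalIntegral.integral_sub hix hiy]
  refine intervalIntegral.intervalIntegral_pos_of_pos_on (hix.sub hiy) (fun t ht => ?_) one_pos
  refine sub_pos.2 (mul_lt_mul_of_pos_left ?_ (rpow_mul_one_sub_rpow_pos b ε ht))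
  exact rpow_lt_rpow (one_sub_mul_pos hy.2 ht).le
    (sub_lt_sub_left (mul_lt_mul_of_pos_right hxy ht.1) 1) hε.1

lemma concaveOn_eulerIntegral (hb : 0 < b) (hε : ε ∈ Ioo (0 : ℝ) 1) :
    ConcaveOn ℝ (Icc 0 1) (eulerIntegral b ε) := by
  refine ⟨convex_Icc 0 1, fun x hx y hy p q hp hq hpq => ?_⟩
  have hix := intervalIntegrable_eulerIntegrand (x := x) hb hε
  have hiy := intervalIntegrable_eulerIntegrand (x := y) hb hε
  simp only [eulerIntegral, smul_eq_mul]
  rw [← intervalIntegral.integral_const_mul, ← intervalIntegral.integral_const_mul,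
    ← intervalIntegral.integral_add (hix.const_mul p) (hiy.const_mul q)]
  refine intervalIntegral.integral_mono_on_of_le_Ioo zero_le_one
    ((hix.const_mul p).add (hiy.const_mul q)) (intervalIntegrable_eulerIntegrand hb hε)
    fun t ht => ?_
  have hconc := (concaveOn_rpow hε.1.le hε.2.le).2 (one_sub_mul_pos hx.2 ht).le
    (one_sub_mul_pos hy.2 ht).le hp hq hpq
  simp only [smul_eq_mul] at hconc
  rw [show p * (1 - x * t) + q * (1 - y * t) = 1 - (p * x + q * y) * t by
    linear_combination hpq] at hconc
  have := mul_le_mul_of_nonneg_left hconc (rpow_mul_one_sub_rpow_pos b ε ht).le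
  linarith

lemma eulerIntegral_one (hb : 0 < b) : eulerIntegral b ε 1 = 1 / b := by
  rw [eulerIntegral, ← integral_rpow_sub_one hb]
  refine intervalIntegral.integral_congr_Ioo_of_le zero_le_one fun t ht => ?_
  simp only [one_mul]
  rw [mul_assoc, ← rpow_add (sub_pos.2 ht.2), neg_add_cancel, rpow_zero, mul_one]

/-- Weighted AM–GM for `1` and `u ^ (-1/2)`, with weights `1 - 2ε` and `2ε`. -/
lemma rpow_neg_le_one_add_mul_rpow {u : ℝ} (hu : 0 ≤ u) (hε0 : 0 ≤ ε) (hε : ε ≤ 1 / 2) :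
    u ^ (-ε) ≤ 1 + 2 * ε * u ^ (-(1 / 2) : ℝ) := by
  have hamgm := geom_mean_le_arith_mean2_weighted (w₁ := 1 - 2 * ε) (w₂ := 2 * ε) (p₁ := 1)
    (p₂ := u ^ (-(1 / 2) : ℝ)) (by linarith) (by linarith) zero_le_one (rpow_nonneg hu _)
    (sub_add_cancel 1 _)
  rw [one_rpow, one_mul, ← rpow_mul hu, show -(1 / 2) * (2 * ε) = -ε by ring] at hamgm
  linarith

lemma rpow_mul_one_sub_rpow_neg_le {t : ℝ} (ht : t ∈ Ioo (0 : ℝ) 1) (hε0 : 0 ≤ ε)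
    (hε : ε ≤ 1 / 2) :
    t ^ (b - 1) * (1 - t) ^ (-ε) ≤
      t ^ (b - 1) + 2 * ε * (t ^ (b - 1) * (1 - t) ^ (-(1 / 2) : ℝ)) := by
  have := mul_le_mul_of_nonneg_left
    (rpow_neg_le_one_add_mul_rpow (sub_nonneg.2 ht.2.le) hε0 hε) (rpow_nonneg ht.1.le (b - 1))
  linarith

lemma eulerIntegral_zero_le (hb : 0 < b) (hε0 : 0 ≤ ε) (hε : ε ≤ 1 / 2) :
    eulerIntegral b ε 0 ≤ 1 / b + 2 * ε * halfBeta b := by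
  have hi := intervalIntegrable_rpow_sub_one hb
  have hq := (intervalIntegrable_rpow_mul_one_sub_rpow_neg (ε := 1 / 2) hb
    (by norm_num)).const_mul (2 * ε)
  simp only [eulerIntegral, zero_mul, sub_zero, one_rpow, mul_one]
  rw [← integral_rpow_sub_one hb, halfBeta, ← intervalIntegral.integral_const_mul,
    ← intervalIntegral.integral_add hi hq]
  exact intervalIntegral.integral_mono_on_of_le_Ioo zero_le_one
    (intervalIntegrable_rpow_mul_one_sub_rpow_neg hb (by linarith)) (hi.add hq)
    fun t ht => rpow_mul_one_sub_rpow_neg_le ht hε0 hε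

end Euler

lemma rpow_sub_rpow_le_mul_log {P Q ε : ℝ} (hQ : 0 < Q) (hQP : Q ≤ P) (hP : P ≤ 1)
    (hε : 0 ≤ ε) : P ^ ε - Q ^ ε ≤ ε * (log P - log Q) := by
  have hP0 : 0 < P := hQ.trans_le hQP
  have hexp : Q ^ ε = P ^ ε * exp (-(ε * (log P - log Q))) := by
    rw [rpow_def_of_pos hQ, rpow_def_of_pos hP0, ← exp_add]
    congr 1
    ring
  have hnonneg : 0 ≤ ε * (log P - log Q) :=
    mul_nonneg hε (sub_nonneg.2 (log_le_log hQ hQP))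
  calc P ^ ε - Q ^ ε = P ^ ε * (1 - exp (-(ε * (log P - log Q)))) := by rw [hexp]; ring
    _ ≤ 1 * (ε * (log P - log Q)) := by
        refine mul_le_mul (rpow_le_one hP0.le hP hε) ?_ ?_ zero_le_one
        · linarith [one_sub_le_exp_neg (ε * (log P - log Q))]
        · exact sub_nonneg.2 (exp_le_one_iff.2 (neg_nonpos.2 hnonneg))
    _ = ε * (log P - log Q) := one_mul _

lemma log_sub_log_one_sub_le {τ y : ℝ} (hτ : τ ≤ 1) (hy0 : 0 ≤ y) (hy : y < 1) :
    log (1 - τ * y) - log (1 - y) ≤ (1 - τ) * (y / (1 - y)) := by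
  have hy1 : 0 < 1 - y := sub_pos.2 hy
  have hτy : 0 < 1 - τ * y := by nlinarith
  rw [← log_div hτy.ne' hy1.ne']
  refine (log_le_sub_one_of_pos (div_pos hτy hy1)).trans_eq ?_
  field_simp
  ring

/-- The first-order part in `ε` of the increment `eulerIntegral b ε (τ * x) - eulerIntegral b ε x`,
divided by `ε`. -/
noncomputable def logIncrement (b x τ : ℝ) : ℝ :=
  ∫ t in (0 : ℝ)..1, t ^ (b - 1) * (log (1 - τ * (x * t)) - log (1 - x * t))

section LogIncrement

variable {b x τ : ℝ}

lemma mul_mem_Ico_of_mem_Ioo {t : ℝ} (hx : x ∈ Ioo (0 : ℝ) 1) (ht : t ∈ Icc (0 : ℝ) 1) :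
    x * t ∈ Ico (0 : ℝ) 1 :=
  ⟨mul_nonneg hx.1.le ht.1, by nlinarith [hx.1, hx.2, ht.2]⟩

lemma intervalIntegrable_logIncrement (hb : 0 < b) (hx : x ∈ Ioo (0 : ℝ) 1)
    (hτ : τ ∈ Icc (0 : ℝ) 1) :
    IntervalIntegrable (fun t : ℝ => t ^ (b - 1) * (log (1 - τ * (x * t)) - log (1 - x * t)))
      volume 0 1 := by
  have hlog : ∀ σ ∈ Icc (0 : ℝ) 1,
      ContinuousOn (fun t : ℝ => log (1 - σ * (x * t))) (uIcc 0 1) := by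
    intro σ hσ
    refine ContinuousOn.log (by fun_prop) fun t ht => ?_
    rw [uIcc_of_le zero_le_one] at ht
    have hxt := mul_mem_Ico_of_mem_Ioo hx ht
    nlinarith [hσ.1, hσ.2, hxt.1, hxt.2]
  refine (intervalIntegrable_rpow_sub_one hb).mul_continuousOn ((hlog τ hτ).sub ?_)
  simpa only [one_mul] using hlog 1 (right_mem_Icc.2 zero_le_one)

lemma one_sub_rpow_sub_le {ε t : ℝ} (hx : x ∈ Ioo (0 : ℝ) 1) (hτ : τ ∈ Icc (0 : ℝ) 1)
    (ht : t ∈ Ioo (0 : ℝ) 1) (hε0 : 0 ≤ ε) (hε : ε ≤ 1 / 2) :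
    t ^ (b - 1) * (1 - t) ^ (-ε) * ((1 - τ * x * t) ^ ε - (1 - x * t) ^ ε) ≤
      ε * (t ^ (b - 1) * (log (1 - τ * (x * t)) - log (1 - x * t)) +
        2 * ε * ((1 - τ) / (1 - x)) * (t ^ (b - 1) * (1 - t) ^ (-(1 / 2) : ℝ))) := by
  obtain ⟨hxt0, hxt1⟩ := mul_mem_Ico_of_mem_Ioo hx (Ioo_subset_Icc_self ht)
  have hτxt : τ * (x * t) ≤ x * t := mul_le_of_le_one_left hxt0 hτ.2
  have hQ : 0 < 1 - x * t := sub_pos.2 hxt1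
  have hQP : 1 - x * t ≤ 1 - τ * (x * t) := by linarith
  have hP : 1 - τ * (x * t) ≤ 1 := by linarith [mul_nonneg hτ.1 hxt0]
  set L := log (1 - τ * (x * t)) - log (1 - x * t)
  have hL0 : 0 ≤ L := sub_nonneg.2 (log_le_log hQ hQP)
  have hL : L ≤ (1 - τ) / (1 - x) := by
    refine (log_sub_log_one_sub_le hτ.2 hxt0 hxt1).trans ?_
    rw [div_eq_mul_one_div (1 - τ)]
    have hxtx : x * t ≤ x := mul_le_of_le_one_right hx.1.le ht.2.le
    exact mul_le_mul_of_nonneg_left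
      (div_le_div₀ zero_le_one hxt1.le (sub_pos.2 hx.2) (by linarith)) (sub_nonneg.2 hτ.2)
  have hs : 0 ≤ t ^ (b - 1) * (1 - t) ^ (-(1 / 2) : ℝ) :=
    mul_nonneg (rpow_nonneg ht.1.le _) (rpow_nonneg (sub_nonneg.2 ht.2.le) _)
  have hw := (rpow_mul_one_sub_rpow_pos b ε ht).le
  rw [mul_assoc τ]
  calc t ^ (b - 1) * (1 - t) ^ (-ε) * ((1 - τ * (x * t)) ^ ε - (1 - x * t) ^ ε)
      ≤ t ^ (b - 1) * (1 - t) ^ (-ε) * (ε * L) := by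
        gcongr
        exact rpow_sub_rpow_le_mul_log hQ hQP hP hε0
    _ ≤ (t ^ (b - 1) + 2 * ε * (t ^ (b - 1) * (1 - t) ^ (-(1 / 2) : ℝ))) * (ε * L) := by
        gcongr
        exact rpow_mul_one_sub_rpow_neg_le ht hε0 hε
    _ = ε * (t ^ (b - 1) * L + 2 * ε * L * (t ^ (b - 1) * (1 - t) ^ (-(1 / 2) : ℝ))) := by ring
    _ ≤ _ := by gcongr

lemma eulerIntegral_sub_le {ε : ℝ} (hb : 0 < b) (hx : x ∈ Ioo (0 : ℝ) 1) (hτ : τ ∈ Icc (0 : ℝ) 1)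
    (hε0 : 0 < ε) (hε : ε ≤ 1 / 2) :
    eulerIntegral b ε (τ * x) - eulerIntegral b ε x ≤
      ε * (logIncrement b x τ + 2 * ε * ((1 - τ) / (1 - x)) * halfBeta b) := by
  have hε1 : ε ∈ Ioo (0 : ℝ) 1 := ⟨hε0, by linarith⟩
  have hix := intervalIntegrable_eulerIntegrand (x := x) hb hε1
  have hiτ := intervalIntegrable_eulerIntegrand (x := τ * x) hb hε1
  have hil := intervalIntegrable_logIncrement hb hx hτ
  have hiq := (intervalIntegrable_rpow_mul_one_sub_rpow_neg (ε := 1 / 2) hb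
    (by norm_num)).const_mul (2 * ε * ((1 - τ) / (1 - x)))
  rw [eulerIntegral, eulerIntegral, logIncrement, halfBeta,
    ← intervalIntegral.integral_sub hiτ hix, ← intervalIntegral.integral_const_mul,
    ← intervalIntegral.integral_add hil hiq, ← intervalIntegral.integral_const_mul]
  refine intervalIntegral.integral_mono_on_of_le_Ioo zero_le_one (hiτ.sub hix)
    ((hil.add hiq).const_mul ε) fun t ht => ?_
  rw [← mul_sub]
  exact one_sub_rpow_sub_le hx hτ ht hε0.le hε

end LogIncrement

lemma integral_rpow_mul_pow_succ {b : ℝ} (hb : 0 < b) (j : ℕ) :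
    ∫ t in (0 : ℝ)..1, t ^ (b - 1) * t ^ (j + 1) = 1 / (b + j + 1) := by
  rw [← integral_rpow_sub_one (by positivity)]
  refine intervalIntegral.integral_congr_Ioo_of_le zero_le_one fun t ht => ?_
  rw [← rpow_add_natCast ht.1.ne']
  congr 1
  push_cast
  ring

lemma summable_pow_succ {x : ℝ} (hx : x ∈ Ioo (0 : ℝ) 1) : Summable fun j : ℕ => x ^ (j + 1) :=
  (summable_nat_add_iff 1).2 (summable_geometric_of_lt_one hx.1.le hx.2)

lemma one_sub_pow_mem_Icc {τ : ℝ} (hτ : τ ∈ Icc (0 : ℝ) 1) (j : ℕ) : 1 - τ ^ j ∈ Icc (0 : ℝ) 1 :=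
  ⟨sub_nonneg.2 (pow_le_one₀ hτ.1 hτ.2), sub_le_self _ (pow_nonneg hτ.1 j)⟩

lemma abs_mul_div_le {u v c w : ℝ} (hw : |u| ≤ w) (hv : v ∈ Icc (0 : ℝ) 1) (hc : 1 ≤ c) :
    |u * v / c| ≤ w := by
  rw [abs_div, abs_mul, abs_of_nonneg hv.1, abs_of_nonneg (zero_le_one.trans hc)]
  exact (div_le_self (mul_nonneg (abs_nonneg u) hv.1) hc).trans
    ((mul_le_of_le_one_right (abs_nonneg u) hv.2).trans hw)

lemma hasSum_log_sub_log {τ y : ℝ} (hτ : τ ∈ Icc (0 : ℝ) 1) (hy : y ∈ Ico (0 : ℝ) 1) :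
    HasSum (fun j : ℕ => y ^ (j + 1) * (1 - τ ^ (j + 1)) / (j + 1))
      (log (1 - τ * y) - log (1 - y)) := by
  have hτy0 : 0 ≤ τ * y := mul_nonneg hτ.1 hy.1
  have hτy : τ * y < 1 := (mul_le_of_le_one_left hy.1 hτ.2).trans_lt hy.2
  have hsum := (hasSum_pow_div_log_of_abs_lt_one (x := y) ((abs_of_nonneg hy.1).trans_lt hy.2)).sub
    (hasSum_pow_div_log_of_abs_lt_one (x := τ * y) (by rwa [abs_of_nonneg hτy0]))
  rw [neg_sub_neg] at hsum
  refine hsum.congr_fun fun j => ?_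
  rw [mul_pow]
  ring

section LogIncrementSeries

variable {b x : ℝ}

lemma hasSum_logIncrement {τ : ℝ} (hb : 0 < b) (hx : x ∈ Ioo (0 : ℝ) 1) (hτ : τ ∈ Icc (0 : ℝ) 1) :
    HasSum (fun j : ℕ => x ^ (j + 1) * (1 - τ ^ (j + 1)) / ((j + 1) * (b + j + 1)))
      (logIncrement b x τ) := by
  have hsum := hasSum_integral_mul_of_abs_le (intervalIntegrable_rpow_sub_one hb)
    (g := fun j t => (x * t) ^ (j + 1) * (1 - τ ^ (j + 1)) / (j + 1))
    (f := fun t => log (1 - τ * (x * t)) - log (1 - x * t))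
    (fun j => by fun_prop) (summable_pow_succ hx) ?_ ?_
  · refine hsum.congr_fun fun j => ?_
    have hsplit : ∀ t : ℝ, t ^ (b - 1) * ((x * t) ^ (j + 1) * (1 - τ ^ (j + 1)) / (j + 1)) =
        x ^ (j + 1) * (1 - τ ^ (j + 1)) / (j + 1) * (t ^ (b - 1) * t ^ (j + 1)) := fun t => by ring
    simp only [hsplit]
    rw [intervalIntegral.integral_const_mul, integral_rpow_mul_pow_succ hb, div_mul_div_comm,
      mul_one]
  · intro j t ht
    rw [uIoc_of_le zero_le_one] at ht
    have hxt := mul_mem_Ico_of_mem_Ioo hx (Ioc_subset_Icc_self ht)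
    refine abs_mul_div_le ?_ (one_sub_pow_mem_Icc hτ _) (by linarith [j.cast_nonneg (α := ℝ)])
    rw [abs_of_nonneg (pow_nonneg hxt.1 _)]
    exact pow_le_pow_left₀ hxt.1 (mul_le_of_le_one_right hx.1.le ht.2) _
  · intro t ht
    rw [uIoc_of_le zero_le_one] at ht
    exact hasSum_log_sub_log hτ (mul_mem_Ico_of_mem_Ioo hx (Ioc_subset_Icc_self ht))

lemma antitoneOn_logIncrement (hb : 0 < b) (hx : x ∈ Ioo (0 : ℝ) 1) :
    AntitoneOn (logIncrement b x) (Icc 0 1) := by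
  intro σ hσ τ hτ hστ
  refine hasSum_le (fun j => ?_) (hasSum_logIncrement hb hx hτ) (hasSum_logIncrement hb hx hσ)
  have := hx.1
  have := hσ.1
  gcongr

lemma intervalIntegrable_logIncrement_left (hb : 0 < b) (hx : x ∈ Ioo (0 : ℝ) 1) :
    IntervalIntegrable (logIncrement b x) volume 0 1 :=
  AntitoneOn.intervalIntegrable <| by
    rw [uIcc_of_le zero_le_one]
    exact antitoneOn_logIncrement hb hx

lemma hasSum_integral_pow_mul_logIncrement (hb : 0 < b) (hx : x ∈ Ioo (0 : ℝ) 1) (n : ℕ) :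
    HasSum (fun j : ℕ => x ^ (j + 1) / ((b + j + 1) * ((n + 1) * (n + j + 2))))
      (∫ τ in (0 : ℝ)..1, τ ^ n * logIncrement b x τ) := by
  have hsum := hasSum_integral_mul_of_abs_le (w := fun τ : ℝ => τ ^ n)
    (g := fun j τ => x ^ (j + 1) * (1 - τ ^ (j + 1)) / ((j + 1) * (b + j + 1)))
    (f := logIncrement b x) (a := 0) (b := 1) (Continuous.intervalIntegrable (by fun_prop) _ _)
    (fun j => by fun_prop) (summable_pow_succ hx) ?_ ?_
  · refine hsum.congr_fun fun j => ?_
    have hsplit : ∀ τ : ℝ, τ ^ n * (x ^ (j + 1) * (1 - τ ^ (j + 1)) / ((j + 1) * (b + j + 1))) =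
        x ^ (j + 1) / ((j + 1) * (b + j + 1)) * (τ ^ n * (1 - τ ^ (j + 1))) := fun τ => by ring
    simp only [hsplit]
    rw [intervalIntegral.integral_const_mul, integral_pow_mul_one_sub_pow]
    push_cast
    have : (n : ℝ) + (j + 1) + 1 = n + j + 2 := by ring
    rw [this]
    field_simp
  · intro j τ hτ
    rw [uIoc_of_le zero_le_one] at hτ
    refine abs_mul_div_le ?_ (one_sub_pow_mem_Icc (Ioc_subset_Icc_self hτ) _)
      (one_le_mul_of_one_le_of_one_le ?_ ?_)
    · rw [abs_of_pos (pow_pos hx.1 _)]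
    · linarith [j.cast_nonneg (α := ℝ)]
    · linarith [j.cast_nonneg (α := ℝ)]
  · intro τ hτ
    rw [uIoc_of_le zero_le_one] at hτ
    exact hasSum_logIncrement hb hx (Ioc_subset_Icc_self hτ)

end LogIncrementSeries

/-! ### The critical integral -/

/-- The integral `∫₀^∞ e^{-κτ} (1 + τ)⁻² dτ` whose fixed point `κ = 2 criticalIntegral κ` is the
critical threshold. -/
noncomputable def criticalIntegral (κ : ℝ) : ℝ :=
  ∫ τ in Ioi (0 : ℝ), exp (-κ * τ) / (1 + τ) ^ 2

lemma exp_div_sq_le_exp (κ : ℝ) {τ : ℝ} (hτ : 0 ≤ τ) :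
    exp (-κ * τ) / (1 + τ) ^ 2 ≤ exp (-κ * τ) :=
  div_le_self (exp_pos _).le (one_le_pow₀ (le_add_of_nonneg_right hτ))

lemma exp_div_sq_nonneg (κ τ : ℝ) : 0 ≤ exp (-κ * τ) / (1 + τ) ^ 2 :=
  div_nonneg (exp_pos _).le (sq_nonneg _)

lemma antitoneOn_exp_div_sq {κ : ℝ} (hκ : 0 ≤ κ) :
    AntitoneOn (fun τ => exp (-κ * τ) / (1 + τ) ^ 2) (Ici 0) := by
  intro σ (hσ : 0 ≤ σ) τ _ hστ
  dsimp only
  rw [neg_mul, neg_mul]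
  gcongr

section CriticalIntegral

variable {κ : ℝ}

lemma integrableOn_criticalIntegrand (hκ : 0 < κ) :
    IntegrableOn (fun τ : ℝ => exp (-κ * τ) / (1 + τ) ^ 2) (Ioi 0) := by
  refine Integrable.mono' (exp_neg_integrableOn_Ioi 0 hκ)
    (Measurable.aestronglyMeasurable (by fun_prop)) ?_
  filter_upwards [ae_restrict_mem measurableSet_Ioi] with τ hτ
  rw [norm_of_nonneg (exp_div_sq_nonneg κ τ)]
  exact exp_div_sq_le_exp κ (le_of_lt hτ)

lemma antitoneOn_criticalIntegral : AntitoneOn criticalIntegral (Ioi 0) := by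
  intro k hk l hl hkl
  refine setIntegral_mono_on (integrableOn_criticalIntegrand hl)
    (integrableOn_criticalIntegrand hk) measurableSet_Ioi fun τ (hτ : 0 < τ) => ?_
  gcongr

lemma criticalIntegral_pos (hκ : 0 < κ) : 0 < criticalIntegral κ := by
  rw [criticalIntegral, setIntegral_pos_iff_support_of_nonneg_ae
    (Eventually.of_forall (exp_div_sq_nonneg κ)) (integrableOn_criticalIntegrand hκ)]
  have hsupp : Ioi 0 ⊆ Function.support fun τ : ℝ => exp (-κ * τ) / (1 + τ) ^ 2 :=
    fun τ (hτ : 0 < τ) => (by positivity : (0 : ℝ) < exp (-κ * τ) / (1 + τ) ^ 2).ne'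
  rw [inter_eq_right.2 hsupp, volume_Ioi]
  exact ENNReal.zero_lt_top

lemma criticalIntegral_two_le : criticalIntegral 2 ≤ 1 / 2 := by
  calc criticalIntegral 2 ≤ ∫ τ in Ioi (0 : ℝ), exp (-2 * τ) :=
        setIntegral_mono_on (integrableOn_criticalIntegrand two_pos)
          (exp_neg_integrableOn_Ioi 0 two_pos) measurableSet_Ioi
          fun τ hτ => exp_div_sq_le_exp 2 (le_of_lt hτ)
    _ = 1 / 2 := by
        rw [integral_exp_mul_Ioi (by norm_num), mul_zero, exp_zero]
        norm_num

lemma continuousOn_criticalIntegral (hκ : 0 < κ) : ContinuousOn criticalIntegral (Ici κ) := by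
  refine continuousOn_of_dominated (bound := fun τ => exp (-κ * τ))
    (fun l _ => Measurable.aestronglyMeasurable (by fun_prop)) (fun l (hl : κ ≤ l) => ?_)
    (exp_neg_integrableOn_Ioi 0 hκ) (Eventually.of_forall fun τ => by fun_prop)
  filter_upwards [ae_restrict_mem measurableSet_Ioi] with τ (hτ : 0 < τ)
  rw [norm_of_nonneg (exp_div_sq_nonneg l τ)]
  refine (exp_div_sq_le_exp l hτ.le).trans ?_
  gcongr

lemma exists_eq_two_mul_criticalIntegral :
    ∃ κc ∈ Ioo (0 : ℝ) 2, κc = 2 * criticalIntegral κc ∧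
      ∀ κ' : ℝ, 0 < κ' → κ' = 2 * criticalIntegral κ' → κ' = κc := by
  set k := min 1 (criticalIntegral 1)
  have hI1 : 0 < criticalIntegral 1 := criticalIntegral_pos one_pos
  have hk : 0 < k := lt_min one_pos hI1
  have hk1 : k ≤ 1 := min_le_left _ _
  have hIk : k ≤ criticalIntegral k :=
    (min_le_right _ _).trans (antitoneOn_criticalIntegral hk (mem_Ioi.2 one_pos) hk1)
  have hcont : ContinuousOn (fun κ => κ - 2 * criticalIntegral κ) (Icc k 2) :=
    continuousOn_id.sub
      (((continuousOn_criticalIntegral hk).mono Icc_subset_Ici_self).const_mul 2)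
  obtain ⟨κc, hκc, hzero⟩ := intermediate_value_Ioo (by linarith) hcont
    (show (0 : ℝ) ∈ _ from ⟨by linarith, by linarith [criticalIntegral_two_le]⟩)
  have hκc0 : 0 < κc := hk.trans hκc.1
  have hfix : κc = 2 * criticalIntegral κc := sub_eq_zero.1 hzero
  refine ⟨κc, ⟨hκc0, hκc.2⟩, hfix, fun κ' hκ' hfix' => ?_⟩
  rcases le_total κ' κc with hle | hle
  · linarith [antitoneOn_criticalIntegral hκ' hκc0 hle]
  · linarith [antitoneOn_criticalIntegral hκc0 hκ' hle]

lemma summable_exp_div_sq_and_tsum_le {r : ℝ} (hκ : 0 < κ) (hr : 0 < r) :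
    Summable (fun j : ℕ => exp (-κ * (r⁻¹ * (j + 1))) / (1 + r⁻¹ * (j + 1)) ^ 2) ∧
      ∑' j : ℕ, exp (-κ * (r⁻¹ * (j + 1))) / (1 + r⁻¹ * (j + 1)) ^ 2 ≤
        r * criticalIntegral κ := by
  have hr' : 0 < r⁻¹ := inv_pos.2 hr
  set g : ℝ → ℝ := fun τ => exp (-κ * τ) / (1 + τ) ^ 2
  have hanti : AntitoneOn (fun s => g (r⁻¹ * s)) (Ici 0) := fun s hs t ht hst =>
    antitoneOn_exp_div_sq hκ.le (mul_nonneg hr'.le hs) (mul_nonneg hr'.le ht)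
      (mul_le_mul_of_nonneg_left hst hr'.le)
  have hint : IntegrableOn (fun s => g (r⁻¹ * s)) (Ioi 0) :=
    (integrableOn_Ioi_comp_mul_left_iff g 0 hr').2
      (by simpa only [mul_zero] using integrableOn_criticalIntegrand hκ)
  have hnonneg : ∀ s ∈ Ioi (0 : ℝ), 0 ≤ g (r⁻¹ * s) := fun s _ => exp_div_sq_nonneg κ _
  have hscale : ∫ s in Ioi (0 : ℝ), g (r⁻¹ * s) = r * criticalIntegral κ := by
    rw [integral_comp_mul_left_Ioi g 0 hr', mul_zero, inv_inv, smul_eq_mul, criticalIntegral]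
  have hsummable := (summable_nat_add_iff 1).2
    (hanti.summable_of_integrableOn_Ioi_zero hint hnonneg)
  have htsum := hanti.tsum_add_one_le_integral hint hnonneg
  rw [hscale] at htsum
  push_cast at hsummable htsum
  exact ⟨hsummable, htsum⟩

lemma pow_div_le_exp_div_sq {b x : ℝ} {n : ℕ} (hn : 0 < n) (hb : n ≤ b) (hx0 : 0 ≤ x)
    (hx : x ≤ 1 - κ / n) (j : ℕ) :
    x ^ (j + 1) / ((b + j + 1) * ((n + 1) * (n + j + 2))) ≤
      1 / (n ^ 2 * (n + 1)) *
        (exp (-κ * ((n : ℝ)⁻¹ * (j + 1))) / (1 + (n : ℝ)⁻¹ * (j + 1)) ^ 2) := by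
  have hn' : (0 : ℝ) < n := Nat.cast_pos.2 hn
  have hb0 : 0 < b := hn'.trans_le hb
  have hxexp : x ≤ exp (-κ * (n : ℝ)⁻¹) := by
    linarith [add_one_le_exp (-κ * (n : ℝ)⁻¹), div_eq_mul_inv κ (n : ℝ)]
  have hpow : exp (-κ * (n : ℝ)⁻¹) ^ (j + 1) = exp (-κ * ((n : ℝ)⁻¹ * (j + 1))) := by
    rw [← exp_nat_mul]
    push_cast
    ring_nf
  have hsq : (n + j + 1) * (n + j + 1) = (n : ℝ) ^ 2 * (1 + (n : ℝ)⁻¹ * (j + 1)) ^ 2 := by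
    field_simp
    ring
  calc x ^ (j + 1) / ((b + j + 1) * ((n + 1) * (n + j + 2)))
      ≤ exp (-κ * (n : ℝ)⁻¹) ^ (j + 1) / ((n + j + 1) * ((n + 1) * (n + j + 1))) := by
        gcongr
        exact one_le_two
    _ = 1 / (n ^ 2 * (n + 1)) *
          (exp (-κ * ((n : ℝ)⁻¹ * (j + 1))) / (1 + (n : ℝ)⁻¹ * (j + 1)) ^ 2) := by
        rw [hpow, div_mul_div_comm, one_mul, mul_left_comm ((n : ℝ) + j + 1), hsq]
        ring

lemma integral_pow_mul_logIncrement_le {b x : ℝ} {n : ℕ} (hn : 0 < n) (hb : n ≤ b) (hκ : 0 < κ)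
    (hx : x ∈ Ioo (0 : ℝ) 1) (hxκ : x ≤ 1 - κ / n) :
    ∫ τ in (0 : ℝ)..1, τ ^ n * logIncrement b x τ ≤ criticalIntegral κ / (n * (n + 1)) := by
  have hn' : (0 : ℝ) < n := Nat.cast_pos.2 hn
  obtain ⟨hsummable, htsum⟩ := summable_exp_div_sq_and_tsum_le hκ hn'
  have hsum := hasSum_integral_pow_mul_logIncrement (hn'.trans_le hb) hx n
  calc ∫ τ in (0 : ℝ)..1, τ ^ n * logIncrement b x τ
      ≤ ∑' j : ℕ, 1 / ((n : ℝ) ^ 2 * (n + 1)) *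
          (exp (-κ * ((n : ℝ)⁻¹ * (j + 1))) / (1 + (n : ℝ)⁻¹ * (j + 1)) ^ 2) := by
        rw [← hsum.tsum_eq]
        exact hsum.summable.tsum_le_tsum (pow_div_le_exp_div_sq hn hb hx.1.le hxκ)
          (hsummable.mul_left _)
    _ ≤ 1 / (n ^ 2 * (n + 1)) * (n * criticalIntegral κ) := by
        rw [tsum_mul_left]
        gcongr
    _ = criticalIntegral κ / (n * (n + 1)) := by
        field_simp

end CriticalIntegral

/-! ### The hypergeometric function `F_t` -/

section Coefficients

variable {t : ℝ}

lemma le_bCoef (t : ℝ) : t ≤ bCoef t := by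
  have : t ≤ √(t ^ 2 + 8) := le_sqrt_of_sq_le (by linarith)
  rw [bCoef]
  linarith

lemma aCoef_add_bCoef (t : ℝ) : aCoef t + bCoef t = t := by
  rw [aCoef, bCoef]
  ring

lemma bCoef_mul_neg_aCoef (t : ℝ) : bCoef t * -aCoef t = 2 := by
  have hsq : √(t ^ 2 + 8) ^ 2 = t ^ 2 + 8 := sq_sqrt (by positivity)
  rw [aCoef, bCoef]
  linarith

lemma bCoef_pos (t : ℝ) : 0 < bCoef t := by
  have : -t < √(t ^ 2 + 8) := lt_sqrt_of_sq_lt (by linarith [neg_sq t])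
  rw [bCoef]
  linarith

lemma neg_aCoef_pos (t : ℝ) : 0 < -aCoef t :=
  pos_of_mul_pos_right (by rw [bCoef_mul_neg_aCoef]; exact two_pos) (bCoef_pos t).le

lemma neg_aCoef_eq (t : ℝ) : -aCoef t = 2 / bCoef t := by
  rw [eq_div_iff (bCoef_pos t).ne', mul_comm, bCoef_mul_neg_aCoef]

lemma neg_aCoef_le_div (ht : 0 < t) : -aCoef t ≤ 2 / t := by
  rw [neg_aCoef_eq]
  exact div_le_div_of_nonneg_left zero_le_two ht (le_bCoef t)

lemma neg_aCoef_lt_one (ht : 1 < t) : -aCoef t < 1 := by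
  have : √(t ^ 2 + 8) < t + 2 := by
    rw [sqrt_lt' (by linarith)]
    linarith
  rw [aCoef]
  linarith

lemma neg_aCoef_le_half (ht : 4 ≤ t) : -aCoef t ≤ 1 / 2 :=
  (neg_aCoef_le_div (by linarith)).trans (by rw [div_le_div_iff₀ (by linarith) two_pos]; linarith)

lemma tendsto_halfBeta_bCoef : Tendsto (fun n : ℕ => halfBeta (bCoef n)) atTop (𝓝 0) :=
  tendsto_halfBeta_atTop.comp
    (tendsto_atTop_mono (fun n => le_bCoef n) tendsto_natCast_atTop_atTop)

lemma neg_aCoef_mem_Ioo (ht : 1 < t) : -aCoef t ∈ Ioo (0 : ℝ) 1 :=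
  ⟨neg_aCoef_pos t, neg_aCoef_lt_one ht⟩

lemma exists_Fhyp_eq_mul_eulerIntegral (ht : 1 < t) :
    ∃ C : ℝ, 0 < C ∧ Fhyp t = fun x => C * eulerIntegral (bCoef t) (-aCoef t) x := by
  have hexponent : t + 1 - bCoef t - 1 = - -aCoef t := by linarith [aCoef_add_bCoef t]
  have hbc : bCoef t < t + 1 := by linarith [aCoef_add_bCoef t, neg_aCoef_lt_one ht]
  refine ⟨Gamma (t + 1) / (Gamma (bCoef t) * Gamma (t + 1 - bCoef t)), ?_, funext fun x => ?_⟩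
  · exact div_pos (Gamma_pos_of_pos (by linarith))
      (mul_pos (Gamma_pos_of_pos (bCoef_pos t)) (Gamma_pos_of_pos (sub_pos.2 hbc)))
  · rw [Fhyp, hyper, if_pos ⟨hbc, bCoef_pos t⟩, hexponent, eulerIntegral]

lemma one_div_le_eulerIntegral {b ε x : ℝ} (hb : 0 < b) (hε : ε ∈ Ioo (0 : ℝ) 1)
    (hx : x ∈ Icc (0 : ℝ) 1) : 1 / b ≤ eulerIntegral b ε x := by
  rw [← eulerIntegral_one hb]
  exact (strictAntiOn_eulerIntegral hb hε).antitoneOn hx (right_mem_Icc.2 zero_le_one) hx.2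

lemma Fhyp_pos {x : ℝ} (ht : 1 < t) (hx : x ∈ Icc (0 : ℝ) 1) : 0 < Fhyp t x := by
  obtain ⟨C, hC, hF⟩ := exists_Fhyp_eq_mul_eulerIntegral ht
  rw [hF]
  exact mul_pos hC ((one_div_pos.2 (bCoef_pos t)).trans_le
    (one_div_le_eulerIntegral (bCoef_pos t) (neg_aCoef_mem_Ioo ht) hx))

lemma strictAntiOn_Fhyp (ht : 1 < t) : StrictAntiOn (Fhyp t) (Icc 0 1) := by
  obtain ⟨C, hC, hF⟩ := exists_Fhyp_eq_mul_eulerIntegral ht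
  rw [hF]
  exact fun x hx y hy hxy => mul_lt_mul_of_pos_left
    (strictAntiOn_eulerIntegral (bCoef_pos t) (neg_aCoef_mem_Ioo ht) hx hy hxy) hC

lemma concaveOn_Fhyp (ht : 1 < t) : ConcaveOn ℝ (Icc 0 1) (Fhyp t) := by
  obtain ⟨C, hC, hF⟩ := exists_Fhyp_eq_mul_eulerIntegral ht
  rw [hF]
  exact (concaveOn_eulerIntegral (bCoef_pos t) (neg_aCoef_mem_Ioo ht)).smul hC.le

end Coefficients

/-- The relative increment `(F_t(τx) - F_t(x)) / F_t(x)`. -/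
noncomputable def relIncrement (t x τ : ℝ) : ℝ := Fhyp t (τ * x) / Fhyp t x - 1

section RelIncrement

variable {t x τ : ℝ}

lemma mul_mem_unitInterval (hτ : τ ∈ Icc (0 : ℝ) 1) (hx : x ∈ Icc (0 : ℝ) 1) :
    τ * x ∈ Icc (0 : ℝ) 1 :=
  ⟨mul_nonneg hτ.1 hx.1, mul_le_one₀ hτ.2 hx.1 hx.2⟩

lemma relIncrement_one (ht : 1 < t) (hx : x ∈ Icc (0 : ℝ) 1) : relIncrement t x 1 = 0 := by
  rw [relIncrement, one_mul, div_self (Fhyp_pos ht hx).ne', sub_self]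

lemma relIncrement_zero_pos (ht : 1 < t) (hx : x ∈ Ioo (0 : ℝ) 1) : 0 < relIncrement t x 0 := by
  have hx' := Ioo_subset_Icc_self hx
  rw [relIncrement, zero_mul, sub_pos, one_lt_div (Fhyp_pos ht hx')]
  exact strictAntiOn_Fhyp ht (left_mem_Icc.2 zero_le_one) hx' hx.1

lemma antitoneOn_relIncrement (ht : 1 < t) (hx : x ∈ Icc (0 : ℝ) 1) :
    AntitoneOn (relIncrement t x) (Icc 0 1) := fun _ hσ _ hτ hστ =>
  sub_le_sub_right (div_le_div_of_nonneg_right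
    ((strictAntiOn_Fhyp ht).antitoneOn (mul_mem_unitInterval hσ hx) (mul_mem_unitInterval hτ hx)
      (mul_le_mul_of_nonneg_right hστ hx.1)) (Fhyp_pos ht hx).le) 1

lemma relIncrement_nonneg (ht : 1 < t) (hx : x ∈ Icc (0 : ℝ) 1) (hτ : τ ∈ Icc (0 : ℝ) 1) :
    0 ≤ relIncrement t x τ := by
  rw [← relIncrement_one ht hx]
  exact antitoneOn_relIncrement ht hx hτ (right_mem_Icc.2 zero_le_one) hτ.2

lemma intervalIntegrable_relIncrement (ht : 1 < t) (hx : x ∈ Icc (0 : ℝ) 1) :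
    IntervalIntegrable (relIncrement t x) volume 0 1 :=
  AntitoneOn.intervalIntegrable <| by
    rw [uIcc_of_le zero_le_one]
    exact antitoneOn_relIncrement ht hx

lemma concaveOn_relIncrement (ht : 1 < t) (hx : x ∈ Icc (0 : ℝ) 1) :
    ConcaveOn ℝ (Icc 0 1) (relIncrement t x) := by
  have hcomp := ((concaveOn_Fhyp ht).comp_linearMap (LinearMap.mulRight ℝ x)).subset
    (fun τ hτ => mul_mem_unitInterval hτ hx) (convex_Icc 0 1)
  refine ((hcomp.smul (inv_nonneg.2 (Fhyp_pos ht hx).le)).add_const (-1)).congr fun τ _ => ?_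
  simp only [Pi.add_apply, Function.comp_apply, LinearMap.mulRight_apply, smul_eq_mul,
    relIncrement]
  ring

lemma relIncrement_le_mul_eulerIntegral_sub (ht : 1 < t) (hx : x ∈ Icc (0 : ℝ) 1)
    (hτ : τ ∈ Icc (0 : ℝ) 1) :
    relIncrement t x τ ≤ bCoef t * (eulerIntegral (bCoef t) (-aCoef t) (τ * x) -
      eulerIntegral (bCoef t) (-aCoef t) x) := by
  have hb := bCoef_pos t
  have hε := neg_aCoef_mem_Ioo ht
  have hJx := one_div_le_eulerIntegral hb hε hx
  have hJ0 : 0 < eulerIntegral (bCoef t) (-aCoef t) x := (one_div_pos.2 hb).trans_le hJx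
  have hJ := (strictAntiOn_eulerIntegral hb hε).antitoneOn (mul_mem_unitInterval hτ hx) hx
    (mul_le_of_le_one_left hx.1 hτ.2)
  obtain ⟨C, hC, hF⟩ := exists_Fhyp_eq_mul_eulerIntegral ht
  rw [relIncrement, hF, mul_div_mul_left _ _ hC.ne', div_sub_one hJ0.ne', div_le_iff₀ hJ0,
    mul_right_comm]
  refine le_mul_of_one_le_left (sub_nonneg.2 hJ) ?_
  rwa [div_le_iff₀' hb] at hJx

lemma relIncrement_zero_le (ht : 4 ≤ t) (hx : x ∈ Icc (0 : ℝ) 1) :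
    relIncrement t x 0 ≤ 4 * halfBeta (bCoef t) := by
  have ht1 : 1 < t := by linarith
  have hb := bCoef_pos t
  have hJx := one_div_le_eulerIntegral hb (neg_aCoef_mem_Ioo ht1) hx
  have hJ0 := eulerIntegral_zero_le hb (neg_aCoef_pos t).le (neg_aCoef_le_half ht)
  calc relIncrement t x 0
      ≤ bCoef t * (eulerIntegral (bCoef t) (-aCoef t) 0 -
          eulerIntegral (bCoef t) (-aCoef t) x) := by
        simpa only [zero_mul] using
          relIncrement_le_mul_eulerIntegral_sub ht1 hx (left_mem_Icc.2 zero_le_one)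
    _ ≤ bCoef t * (2 * -aCoef t * halfBeta (bCoef t)) :=
        mul_le_mul_of_nonneg_left (by linarith) hb.le
    _ = 4 * halfBeta (bCoef t) := by
        linear_combination 2 * halfBeta (bCoef t) * bCoef_mul_neg_aCoef t

lemma relIncrement_le_logIncrement_add (ht : 4 ≤ t) (hx : x ∈ Ioo (0 : ℝ) 1)
    (hτ : τ ∈ Icc (0 : ℝ) 1) :
    relIncrement t x τ ≤ 2 * logIncrement (bCoef t) x τ +
      8 * halfBeta (bCoef t) / (t * (1 - x)) * (1 - τ) := by
  have ht0 : 0 < t := by linarith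
  have hb := bCoef_pos t
  have hfrac : 0 ≤ (1 - τ) / (1 - x) * halfBeta (bCoef t) :=
    mul_nonneg (div_nonneg (sub_nonneg.2 hτ.2) (sub_nonneg.2 hx.2.le)) (halfBeta_nonneg _)
  calc relIncrement t x τ
      ≤ bCoef t * (-aCoef t * (logIncrement (bCoef t) x τ +
          2 * -aCoef t * ((1 - τ) / (1 - x)) * halfBeta (bCoef t))) :=
        (relIncrement_le_mul_eulerIntegral_sub (by linarith) (Ioo_subset_Icc_self hx) hτ).trans
          (mul_le_mul_of_nonneg_left
            (eulerIntegral_sub_le hb hx hτ (neg_aCoef_pos t) (neg_aCoef_le_half ht)) hb.le)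
    _ = 2 * logIncrement (bCoef t) x τ +
          4 * -aCoef t * ((1 - τ) / (1 - x) * halfBeta (bCoef t)) := by
        rw [← mul_assoc, bCoef_mul_neg_aCoef]
        ring
    _ ≤ 2 * logIncrement (bCoef t) x τ +
          4 * (2 / t) * ((1 - τ) / (1 - x) * halfBeta (bCoef t)) := by
        gcongr
        exact neg_aCoef_le_div ht0
    _ = _ := by
        have := (sub_pos.2 hx.2).ne'
        field_simp
        ring

end RelIncrement

/-! ### The dispersion function -/

/-- The remainder `ζ_n(x) / F_n(x) - n / (n + 1) * (1 - x * φ_n)`, see `zetaDisp_eq`. -/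
noncomputable def dispRemainder (n : ℕ) (x : ℝ) : ℝ :=
  ∫ τ in (0 : ℝ)..1, relIncrement n x τ * τ ^ n * (-1 + 2 * x * τ)

/-- The function `φ_m = 1 + κ / m + 2 / (m (m + 2))`, for which `B / 2 + A / (4 x) = Ω̂_m` exactly
when `x φ_m = 1`. -/
noncomputable def singularRecip (κ : ℝ) (m : ℕ) : ℝ := 1 + κ / m + 2 / (m * (m + 2))

section Remainder

variable {n : ℕ} {x : ℝ}

lemma abs_dispRemainder_le (hn : 4 ≤ n) (hx : x ∈ Icc (0 : ℝ) 1) :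
    |dispRemainder n x| ≤ 4 * halfBeta (bCoef n) / (n + 1) := by
  have hn4 : (4 : ℝ) ≤ n := Nat.ofNat_le_cast.2 hn
  have hn1 : (1 : ℝ) < n := by linarith
  have hbound : ∀ τ ∈ Ioc (0 : ℝ) 1, ‖relIncrement n x τ * τ ^ n * (-1 + 2 * x * τ)‖ ≤
      4 * halfBeta (bCoef n) * τ ^ n := by
    intro τ hτ
    have hτ' := Ioc_subset_Icc_self hτ
    have hpow : 0 ≤ τ ^ n := pow_nonneg hτ.1.le n
    have hrel0 := relIncrement_nonneg hn1 hx hτ'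
    have hrel : relIncrement n x τ ≤ 4 * halfBeta (bCoef n) :=
      (antitoneOn_relIncrement hn1 hx (left_mem_Icc.2 zero_le_one) hτ' hτ.1.le).trans
        (relIncrement_zero_le hn4 hx)
    obtain ⟨hxτ0, hxτ1⟩ := mul_mem_unitInterval hx hτ'
    have hweight : |-1 + 2 * x * τ| ≤ 1 := abs_le.2 ⟨by linarith, by linarith⟩
    rw [norm_mul, norm_of_nonneg (mul_nonneg hrel0 hpow), norm_eq_abs]
    exact (mul_le_of_le_one_right (mul_nonneg hrel0 hpow) hweight).trans
      (mul_le_mul_of_nonneg_right hrel hpow)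
  calc |dispRemainder n x| ≤ ∫ τ in (0 : ℝ)..1, 4 * halfBeta (bCoef n) * τ ^ n :=
        intervalIntegral.norm_integral_le_of_norm_le zero_le_one (Eventually.of_forall hbound)
          (Continuous.intervalIntegrable (by fun_prop) _ _)
    _ = 4 * halfBeta (bCoef n) / (n + 1) := by
        rw [intervalIntegral.integral_const_mul, integral_pow, one_pow,
          zero_pow n.succ_ne_zero, sub_zero, mul_one_div]

lemma dispRemainder_pos (hn : 2 ≤ n) (hx : x ∈ Ioo (0 : ℝ) 1) (hnx : n + 3 < 2 * x * (n + 1)) :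
    0 < dispRemainder n x := by
  have hn1 : (1 : ℝ) < n := Nat.one_lt_cast.2 hn
  have hx' := Ioo_subset_Icc_self hx
  exact integral_pos_of_concaveOn (concaveOn_relIncrement hn1 hx')
    (intervalIntegrable_relIncrement hn1 hx') (relIncrement_zero_pos hn1 hx)
    (relIncrement_one hn1 hx') hnx

lemma relIncrement_mul_pow_mul_affine_le {τ : ℝ} (hn : 4 ≤ n) (hx : x ∈ Ioo (0 : ℝ) 1)
    (hτ : τ ∈ Ioo (0 : ℝ) 1) :
    relIncrement n x τ * τ ^ n * (-1 + 2 * x * τ) ≤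
      2 * (τ ^ n * logIncrement (bCoef n) x τ) +
        8 * halfBeta (bCoef n) / (n * (1 - x)) * (τ ^ n * (1 - τ ^ 1)) := by
  have hn4 : (4 : ℝ) ≤ n := Nat.ofNat_le_cast.2 hn
  have hx' := Ioo_subset_Icc_self hx
  have hτ' := Ioo_subset_Icc_self hτ
  have hpow : 0 ≤ τ ^ n := pow_nonneg hτ.1.le n
  have hrel0 := relIncrement_nonneg (by linarith : (1 : ℝ) < n) hx' hτ'
  have hweight : -1 + 2 * x * τ ≤ 1 := by linarith [(mul_mem_unitInterval hx' hτ').2]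
  calc relIncrement n x τ * τ ^ n * (-1 + 2 * x * τ)
      ≤ relIncrement n x τ * τ ^ n := mul_le_of_le_one_right (mul_nonneg hrel0 hpow) hweight
    _ ≤ (2 * logIncrement (bCoef n) x τ +
          8 * halfBeta (bCoef n) / (n * (1 - x)) * (1 - τ)) * τ ^ n :=
        mul_le_mul_of_nonneg_right (relIncrement_le_logIncrement_add hn4 hx hτ') hpow
    _ = _ := by ring

lemma dispRemainder_le {κ : ℝ} (hn : 4 ≤ n) (hκ : 0 < κ) (hx : x ∈ Ioo (0 : ℝ) 1)
    (hxκ : x ≤ 1 - κ / n) :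
    dispRemainder n x ≤
      (2 * criticalIntegral κ + 8 * halfBeta (bCoef n) / κ) / (n * (n + 1)) := by
  have hn4 : (4 : ℝ) ≤ n := Nat.ofNat_le_cast.2 hn
  have hn1 : (1 : ℝ) < n := by linarith
  have hx' := Ioo_subset_Icc_self hx
  have : 0 < 1 - x := sub_pos.2 hx.2
  have hq := halfBeta_nonneg (bCoef n)
  have hrel := intervalIntegrable_relIncrement hn1 hx'
  have hlog : IntervalIntegrable (fun τ => τ ^ n * logIncrement (bCoef n) x τ) volume 0 1 :=
    (intervalIntegrable_logIncrement_left (bCoef_pos n) hx).continuousOn_mul (by fun_prop)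
  set c := 8 * halfBeta (bCoef n) / (n * (1 - x))
  have hc : c ≤ 8 * halfBeta (bCoef n) / κ := by
    refine div_le_div_of_nonneg_left (by positivity) hκ ?_
    rw [← div_le_iff₀' (by linarith)]
    linarith
  calc dispRemainder n x
      ≤ ∫ τ in (0 : ℝ)..1, (2 * (τ ^ n * logIncrement (bCoef n) x τ) +
          c * (τ ^ n * (1 - τ ^ 1))) :=
        intervalIntegral.integral_mono_on_of_le_Ioo zero_le_one
          ((hrel.mul_continuousOn (by fun_prop)).mul_continuousOn (by fun_prop))
          ((hlog.const_mul 2).add (Continuous.intervalIntegrable (by fun_prop) _ _))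
          fun τ hτ => relIncrement_mul_pow_mul_affine_le hn hx hτ
    _ = 2 * (∫ τ in (0 : ℝ)..1, τ ^ n * logIncrement (bCoef n) x τ) +
          c * (1 / ((n + 1) * (n + 2))) := by
        rw [intervalIntegral.integral_add (hlog.const_mul 2)
          (Continuous.intervalIntegrable (by fun_prop) _ _), intervalIntegral.integral_const_mul,
          intervalIntegral.integral_const_mul, integral_pow_mul_one_sub_pow]
        push_cast
        ring
    _ ≤ 2 * (criticalIntegral κ / (n * (n + 1))) +
          8 * halfBeta (bCoef n) / κ * (1 / ((n + 1) * n)) := by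
        gcongr
        · exact integral_pow_mul_logIncrement_le (by omega) (le_bCoef n) hκ hx hxκ
        · linarith
    _ = _ := by ring

end Remainder

section Zeros

variable {A B κ : ℝ} {m n : ℕ} {x : ℝ}

lemma integral_pow_mul_affine (n : ℕ) (x : ℝ) :
    ∫ τ in (0 : ℝ)..1, τ ^ n * (-1 + 2 * x * τ) = -1 / (n + 1) + 2 * x / (n + 2) := by
  have hsplit : ∀ τ : ℝ, τ ^ n * (-1 + 2 * x * τ) = 2 * x * τ ^ (n + 1) - τ ^ n :=
    fun τ => by ring
  simp only [hsplit]
  rw [intervalIntegral.integral_sub (Continuous.intervalIntegrable (by fun_prop) _ _)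
    (Continuous.intervalIntegrable (by fun_prop) _ _), intervalIntegral.integral_const_mul,
    integral_pow, integral_pow]
  push_cast
  simp only [one_pow, ne_eq, n.succ_ne_zero, (n + 1).succ_ne_zero, not_false_eq_true, zero_pow,
    sub_zero]
  ring

lemma integral_Fhyp_mul_pow_mul_affine (hn : 2 ≤ n) (hx : x ∈ Icc (0 : ℝ) 1) :
    ∫ τ in (0 : ℝ)..1, Fhyp n (τ * x) * τ ^ n * (-1 + 2 * x * τ) =
      Fhyp n x * (dispRemainder n x + (-1 / (n + 1) + 2 * x / (n + 2))) := by
  have hn1 : (1 : ℝ) < n := Nat.one_lt_cast.2 hn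
  have hF : Fhyp n x ≠ 0 := (Fhyp_pos hn1 hx).ne'
  have hsplit : ∀ τ : ℝ, Fhyp n (τ * x) * τ ^ n * (-1 + 2 * x * τ) =
      Fhyp n x * (relIncrement n x τ * τ ^ n * (-1 + 2 * x * τ) + τ ^ n * (-1 + 2 * x * τ)) := by
    intro τ
    rw [relIncrement]
    field_simp
    ring
  simp only [hsplit]
  rw [intervalIntegral.integral_const_mul, intervalIntegral.integral_add
    (((intervalIntegrable_relIncrement hn1 hx).mul_continuousOn (by fun_prop)).mul_continuousOn
      (by fun_prop)) (Continuous.intervalIntegrable (by fun_prop) _ _), integral_pow_mul_affine,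
    dispRemainder]

lemma zetaDisp_eq (B : ℝ) (hA : A ≠ 0) (hn : 2 ≤ n) (hx : x ∈ Icc (0 : ℝ) 1) :
    zetaDisp A B n x = Fhyp n x *
      (n / (n + 1) * (1 - x * singularRecip (kap A B) n) + dispRemainder n x) := by
  have hn0 : (n : ℝ) ≠ 0 := Nat.cast_ne_zero.2 (by omega)
  have hcoeff : 1 - x + (A + 2 * B) / (A * (n + 1)) * x + (-1 / (n + 1) + 2 * x / (n + 2)) =
      n / (n + 1) * (1 - x * singularRecip (kap A B) n) := by
    rw [singularRecip, kap]
    field_simp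
    ring
  rw [zetaDisp, integral_Fhyp_mul_pow_mul_affine hn hx, ← hcoeff]
  ring

lemma mul_singularRecip_eq_one (hA : A ≠ 0) (hm : 1 ≤ m) (hx : x ≠ 0)
    (h : B / 2 + A / (4 * x) = OmHat A B m) : x * singularRecip (kap A B) m = 1 := by
  have hm' : (m : ℝ) ≠ 0 := Nat.cast_ne_zero.2 (by omega)
  rw [OmHat] at h
  rw [singularRecip, kap]
  field_simp at h ⊢
  linear_combination (-1 / 2) * h

lemma one_add_div_le_singularRecip (κ : ℝ) (m : ℕ) : 1 + κ / m ≤ singularRecip κ m :=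
  le_add_of_nonneg_right (by positivity)

lemma singularRecip_pos (hκ : 0 < κ) (m : ℕ) : 0 < singularRecip κ m := by
  rw [singularRecip]
  positivity

lemma singularRecip_add_le (κ : ℝ) (hn : 0 < n) (h : n ≤ m) :
    singularRecip κ m + κ * (1 / n - 1 / m) ≤ singularRecip κ n := by
  have : (0 : ℝ) < n := Nat.cast_pos.2 hn
  have hnm : (n : ℝ) ≤ m := Nat.cast_le.2 h
  have hle : 2 / ((m : ℝ) * (m + 2)) ≤ 2 / (n * (n + 2)) := by gcongr
  rw [singularRecip, singularRecip]
  linarith [mul_one_div κ (n : ℝ), mul_one_div κ (m : ℝ)]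

lemma singularRecip_le (hκ : 0 ≤ κ) (hn : 0 < n) (h : n ≤ m) :
    singularRecip κ m ≤ singularRecip κ n := by
  have hinv : (1 : ℝ) / m ≤ 1 / n :=
    one_div_le_one_div_of_le (Nat.cast_pos.2 hn) (Nat.cast_le.2 h)
  linarith [singularRecip_add_le κ hn h, mul_nonneg hκ (sub_nonneg.2 hinv)]

lemma tendsto_singularRecip (κ : ℝ) : Tendsto (singularRecip κ) atTop (𝓝 1) := by
  have hquad : Tendsto (fun m : ℕ => 2 / ((m : ℝ) * (m + 2))) atTop (𝓝 0) :=
    tendsto_const_nhds.div_atTop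
      (tendsto_natCast_atTop_atTop.atTop_mul_atTop₀
        (tendsto_atTop_add_const_right _ _ tendsto_natCast_atTop_atTop))
  have hsum := ((tendsto_const_div_atTop_nhds_zero_nat κ).const_add 1).add hquad
  rwa [add_zero, add_zero] at hsum

/-- The zeros of `ζ_n` in `(0, 1)`. -/
def dispZeros (A B : ℝ) (n : ℕ) : Set ℝ := {x ∈ Ioo 0 1 | zetaDisp A B n x = 0}

lemma ne_zero_of_kap_pos (hκ : 0 < kap A B) : A ≠ 0 := by
  rintro rfl
  simp only [kap, div_zero, lt_irrefl] at hκ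

lemma mul_singularRecip_eq_of_mem_dispZeros (hA : A ≠ 0) (hn : 2 ≤ n)
    (hx : x ∈ dispZeros A B n) :
    x * singularRecip (kap A B) n = 1 + (n + 1) / n * dispRemainder n x := by
  have hx' := Ioo_subset_Icc_self hx.1
  have hn0 : (n : ℝ) ≠ 0 := Nat.cast_ne_zero.2 (by omega)
  have hzero := hx.2
  rw [zetaDisp_eq B hA hn hx', mul_eq_zero,
    or_iff_right (Fhyp_pos (Nat.one_lt_cast.2 hn) hx').ne'] at hzero
  field_simp at hzero ⊢
  linarith

lemma abs_mul_singularRecip_sub_one_le (hA : A ≠ 0) (hn : 4 ≤ n) (hx : x ∈ dispZeros A B n) :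
    |x * singularRecip (kap A B) n - 1| ≤ 4 * halfBeta (bCoef n) / n := by
  have hn0 : (n : ℝ) ≠ 0 := Nat.cast_ne_zero.2 (by omega)
  rw [mul_singularRecip_eq_of_mem_dispZeros hA (by omega) hx, add_sub_cancel_left, abs_mul,
    abs_of_nonneg (by positivity)]
  calc (n + 1) / n * |dispRemainder n x|
      ≤ (n + 1) / n * (4 * halfBeta (bCoef n) / (n + 1)) := by
        gcongr
        exact abs_dispRemainder_le hn (Ioo_subset_Icc_self hx.1)
    _ = 4 * halfBeta (bCoef n) / n := by field_simp

lemma eventually_lt_of_mem_dispZeros {c : ℝ} (hκ : 0 < kap A B) (hc : c < 1) :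
    ∀ᶠ n in atTop, ∀ x ∈ dispZeros A B n, c < x := by
  have hlim : Tendsto (fun n : ℕ => c * singularRecip (kap A B) n + 4 * halfBeta (bCoef n) / n)
      atTop (𝓝 c) := by
    simpa only [mul_one, add_zero] using ((tendsto_singularRecip (kap A B)).const_mul c).add
      ((tendsto_halfBeta_bCoef.const_mul 4).div_atTop tendsto_natCast_atTop_atTop)
  filter_upwards [hlim.eventually_lt_const hc, eventually_ge_atTop 4] with n hlt hn x hx
  have hle := (abs_le.1 (abs_mul_singularRecip_sub_one_le (ne_zero_of_kap_pos hκ) hn hx)).1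
  exact lt_of_mul_lt_mul_right (by linarith) (singularRecip_pos hκ n).le

lemma eventually_one_lt_mul_singularRecip (hκ : 0 < kap A B) :
    ∀ᶠ n in atTop, ∀ x ∈ dispZeros A B n, 1 < x * singularRecip (kap A B) n := by
  filter_upwards [eventually_lt_of_mem_dispZeros hκ (show (3 / 4 : ℝ) < 1 by norm_num),
    eventually_ge_atTop 4] with n hlt hn x hx
  have hn4 : (4 : ℝ) ≤ n := Nat.ofNat_le_cast.2 hn
  have hxn : (n : ℝ) + 3 < 2 * x * (n + 1) := by nlinarith [hlt x hx]
  have hpos := dispRemainder_pos (by omega) hx.1 hxn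
  rw [mul_singularRecip_eq_of_mem_dispZeros (ne_zero_of_kap_pos hκ) (by omega) hx]
  exact lt_add_of_pos_right 1 (by positivity)

lemma eventually_mul_singularRecip_two_mul_lt_one (hκ : 0 < kap A B) :
    ∀ᶠ n in atTop, ∀ x ∈ dispZeros A B n, x * singularRecip (kap A B) (2 * n) < 1 := by
  filter_upwards [eventually_lt_of_mem_dispZeros hκ (show (1 / 2 : ℝ) < 1 by norm_num),
    (tendsto_halfBeta_bCoef.const_mul 4).eventually_lt_const
      (show 4 * 0 < kap A B / 4 by linarith), eventually_ge_atTop 4] with n hlt hq hn x hx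
  have : (0 : ℝ) < n := Nat.cast_pos.2 (by omega)
  have hle := (abs_le.1 (abs_mul_singularRecip_sub_one_le (ne_zero_of_kap_pos hκ) hn hx)).2
  have hgap := singularRecip_add_le (kap A B) (n := n) (m := 2 * n) (by omega) (by omega)
  have hhalf : kap A B * (1 / n - 1 / (2 * n : ℕ)) = kap A B / 2 / n := by
    push_cast
    field_simp
    ring
  rw [hhalf] at hgap
  calc x * singularRecip (kap A B) (2 * n)
      ≤ x * singularRecip (kap A B) n - x * (kap A B / 2 / n) := by
        rw [← mul_sub]
        exact mul_le_mul_of_nonneg_left (by linarith) hx.1.1.le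
    _ ≤ 1 + 4 * halfBeta (bCoef n) / n - 1 / 2 * (kap A B / 2 / n) := by
        gcongr
        · linarith
        · exact (hlt x hx).le
    _ < 1 + kap A B / 4 / n - 1 / 2 * (kap A B / 2 / n) := by gcongr
    _ = 1 := by ring

lemma le_one_sub_div_of_mem_dispZeros {c k : ℝ} (hκ : 0 < kap A B) (hn : 4 ≤ n)
    (hx : x ∈ dispZeros A B n) (hc : c ≤ x)
    (hq : 4 * halfBeta (bCoef n) ≤ c * kap A B - k) : x ≤ 1 - k / n := by
  have : (0 : ℝ) < n := Nat.cast_pos.2 (by omega)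
  have hle := (abs_le.1 (abs_mul_singularRecip_sub_one_le (ne_zero_of_kap_pos hκ) hn hx)).2
  have hlower : x + c * kap A B / n ≤ x * singularRecip (kap A B) n :=
    calc x + c * kap A B / n ≤ x * (1 + kap A B / n) := by
          rw [mul_add, mul_one, mul_div_assoc]
          gcongr
      _ ≤ _ := mul_le_mul_of_nonneg_left (one_add_div_le_singularRecip _ n) hx.1.1.le
  have hdiv : 4 * halfBeta (bCoef n) / n ≤ c * kap A B / n - k / n := by
    rw [← sub_div]
    gcongr
  linarith

lemma eventually_mul_singularRecip_succ_lt_one {k : ℝ} (hk : 0 < k)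
    (hIk : 2 * criticalIntegral k ≤ k) (hkκ : k < kap A B) :
    ∀ᶠ n in atTop, ∀ x ∈ dispZeros A B n, x * singularRecip (kap A B) (n + 1) < 1 := by
  have hκ : 0 < kap A B := hk.trans hkκ
  obtain ⟨c, hkc, hc⟩ := exists_between ((div_lt_one hκ).2 hkκ)
  rw [div_lt_iff₀ hκ] at hkc
  have hlim : Tendsto (fun n : ℕ => (k + 8 * halfBeta (bCoef n) / k) * (1 + 1 / n)) atTop
      (𝓝 k) := by
    simpa only [mul_zero, zero_div, add_zero, mul_one] using
      (((tendsto_halfBeta_bCoef.const_mul 8).div_const k).const_add k).mul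
        ((tendsto_const_div_atTop_nhds_zero_nat 1).const_add 1)
  filter_upwards [eventually_lt_of_mem_dispZeros hκ hc,
    (tendsto_halfBeta_bCoef.const_mul 4).eventually_lt_const
      (show 4 * 0 < c * kap A B - k by linarith), hlim.eventually_lt_const hkc,
    eventually_ge_atTop 4] with n hcx hq hgap hn x hx
  have : (0 : ℝ) < n := Nat.cast_pos.2 (by omega)
  have hR := dispRemainder_le hn hk hx.1
    (le_one_sub_div_of_mem_dispZeros hκ hn hx (hcx x hx).le hq.le)
  have hdiff : kap A B * (1 / n - 1 / (n + 1 : ℕ)) = kap A B / (n * (n + 1)) := by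
    push_cast
    field_simp
    ring
  have hrecip := singularRecip_add_le (kap A B) (n := n) (m := n + 1) (by omega) n.le_succ
  rw [hdiff] at hrecip
  calc x * singularRecip (kap A B) (n + 1)
      ≤ x * singularRecip (kap A B) n - x * (kap A B / (n * (n + 1))) := by
        rw [← mul_sub]
        exact mul_le_mul_of_nonneg_left (by linarith) hx.1.1.le
    _ ≤ 1 + (n + 1) / n * ((k + 8 * halfBeta (bCoef n) / k) / (n * (n + 1))) -
          c * (kap A B / (n * (n + 1))) := by
        rw [mul_singularRecip_eq_of_mem_dispZeros (ne_zero_of_kap_pos hκ) (by omega) hx]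
        gcongr
        · exact hR.trans (by gcongr)
        · exact (hcx x hx).le
    _ = 1 + ((k + 8 * halfBeta (bCoef n) / k) * (1 + 1 / n) - c * kap A B) / (n * (n + 1)) := by
        field_simp
        ring
    _ < 1 := add_lt_of_neg_right 1 (div_neg_of_neg_of_pos (sub_neg.2 hgap) (by positivity))

lemma ne_OmHat_of_one_lt (hκ : 0 < kap A B) (hx : 0 < x) (hm : 1 ≤ m) (hmn : m ≤ n)
    (h : 1 < x * singularRecip (kap A B) n) : B / 2 + A / (4 * x) ≠ OmHat A B m := fun heq =>
  (h.trans_le (mul_le_mul_of_nonneg_left (singularRecip_le hκ.le hm hmn) hx.le)).ne'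
    (mul_singularRecip_eq_one (ne_zero_of_kap_pos hκ) hm hx.ne' heq)

lemma ne_OmHat_of_lt_one (hκ : 0 < kap A B) (hx : 0 < x) (hn : 1 ≤ n) (hnm : n ≤ m)
    (h : x * singularRecip (kap A B) n < 1) : B / 2 + A / (4 * x) ≠ OmHat A B m := fun heq =>
  ((mul_le_mul_of_nonneg_left (singularRecip_le hκ.le hn hnm) hx.le).trans_lt h).ne
    (mul_singularRecip_eq_one (ne_zero_of_kap_pos hκ) (hn.trans hnm) hx.ne' heq)

end Zeros

theorem eigenvalue_singular_separation_general (A B : ℝ) (hκ : 0 < kap A B) :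
    (∃ n₀ : ℕ, ∀ n : ℕ, n₀ ≤ n → ∀ x ∈ dispZeros A B n, ∀ m : ℕ, 1 ≤ m → m ≤ n ∨ 2 * n ≤ m →
      B / 2 + A / (4 * x) ≠ OmHat A B m) ∧
    ∃ κc ∈ Ioo (0 : ℝ) 2, κc = 2 * criticalIntegral κc ∧
      (∀ κ' : ℝ, 0 < κ' → κ' = 2 * criticalIntegral κ' → κ' = κc) ∧
      (κc < kap A B →
        ∃ n₀ : ℕ, ∀ n : ℕ, n₀ ≤ n → ∀ x ∈ dispZeros A B n, ∀ m : ℕ, 1 ≤ m →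
          B / 2 + A / (4 * x) ≠ OmHat A B m) := by
  refine ⟨?_, ?_⟩
  · obtain ⟨n₀, hn₀⟩ := eventually_atTop.1 ((eventually_one_lt_mul_singularRecip hκ).and
      ((eventually_mul_singularRecip_two_mul_lt_one hκ).and (eventually_ge_atTop 1)))
    refine ⟨n₀, fun n hn x hx m hm hmn => ?_⟩
    obtain ⟨hone, htwo, hn1⟩ := hn₀ n hn
    rcases hmn with hmn | hmn
    · exact ne_OmHat_of_one_lt hκ hx.1.1 hm hmn (hone x hx)
    · exact ne_OmHat_of_lt_one hκ hx.1.1 (by omega) hmn (htwo x hx)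
  · obtain ⟨κc, hκc, hfix, huniq⟩ := exists_eq_two_mul_criticalIntegral
    refine ⟨κc, hκc, hfix, huniq, fun hlt => ?_⟩
    obtain ⟨n₀, hn₀⟩ := eventually_atTop.1 ((eventually_one_lt_mul_singularRecip hκ).and
      (eventually_mul_singularRecip_succ_lt_one hκc.1 hfix.ge hlt))
    refine ⟨n₀, fun n hn x hx m hm => ?_⟩
    rcases Nat.lt_or_ge n m with hnm | hmn
    · exact ne_OmHat_of_lt_one hκ hx.1.1 (Nat.succ_pos n) hnm ((hn₀ n hn).2 x hx)
    · exact ne_OmHat_of_one_lt hκ hx.1.1 hm hmn ((hn₀ n hn).1 x hx)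

/-- separation between the eigenvalues `Ω_n = B/2 + A/(4x_n)` and the singular
set, and the critical threshold `κ_c ∈ (0,2)` for full separation. -/
theorem eigenvalue_singular_separation (A B : ℝ) (hA : 0 < A) (hAB : A + B < 0)
    (xseq : ℕ → ℝ) (N : ℕ)
    (hx : ∀ n : ℕ, N ≤ n →
      xseq n ∈ Ioo (0:ℝ) 1 ∧ zetaDisp A B n (xseq n) = 0 ∧
      ∀ y ∈ Ioo (0:ℝ) 1, zetaDisp A B n y = 0 → y = xseq n) :
    (∃ n₀ : ℕ, N ≤ n₀ ∧ ∀ n : ℕ, n₀ ≤ n → ∀ p : ℕ, 1 ≤ p →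
      B / 2 + A / (4 * xseq n) ≠ OmHat A B (n * p)) ∧
    ∃ κc : ℝ, κc ∈ Ioo (0:ℝ) 2 ∧
      κc = 2 * ∫ τ in Ioi (0:ℝ), Real.exp (-κc * τ) / (1 + τ) ^ 2 ∧
      (∀ κ' ∈ Ioo (0:ℝ) 2,
        κ' = 2 * (∫ τ in Ioi (0:ℝ), Real.exp (-κ' * τ) / (1 + τ) ^ 2) → κ' = κc) ∧
      (κc < kap A B →
        ∃ n₀ : ℕ, ∀ n : ℕ, n₀ ≤ n → ∀ m : ℕ, n₀ ≤ m →
          B / 2 + A / (4 * xseq n) ≠ OmHat A B m) := by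
  obtain ⟨⟨n₀, hn₀⟩, κc, hκc, hfix, huniq, hall⟩ :=
    eigenvalue_singular_separation_general A B (div_pos (by linarith) hA)
  have hzero : ∀ n, N ≤ n → xseq n ∈ dispZeros A B n := fun n hn => ⟨(hx n hn).1, (hx n hn).2.1⟩
  refine ⟨⟨max N (max n₀ 1), le_max_left _ _, fun n hn p hp => ?_⟩,
    κc, hκc, hfix, fun κ' hκ' => huniq κ' hκ'.1, fun hlt => ?_⟩
  · simp only [max_le_iff] at hn
    refine hn₀ n hn.2.1 _ (hzero n hn.1) _ (Nat.mul_pos hn.2.2 hp) ?_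
    rcases hp.eq_or_lt with rfl | hp2
    · exact Or.inl (mul_one n).le
    · exact Or.inr (mul_comm 2 n ▸ Nat.mul_le_mul_left n hp2)
  · obtain ⟨n₁, hn₁⟩ := hall hlt
    refine ⟨max N (max n₁ 1), fun n hn m hm => ?_⟩
    simp only [max_le_iff] at hn hm
    exact hn₁ n hn.2.1 _ (hzero n hn.1) m hm.2.2
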